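/- arXiv:2510.02912 — 2 statements merged into one kernel-verified Lean document; each statement's English description precedes it below -/
import Mathlib

section
/- Let α be a type with a nonempty finite ground set V (a finset), and let f : Finset α → ℝ be monotone (f(S) ≤ f(T) whenever S ⊆ T) and submodular (f(insert x S) − f(S) ≥ f(insert x T) − f(T) whenever S ⊆ T and x ∉ T). Let k ≥ 1 be a natural number. Then for every S ⊆ V and every T ⊆ V with |T| ≤ k: f(T) − f(S) ≤ k · max_{x ∈ V} (f(insert x S) − f(S)). -/
/-!
Adding the elements of `T` to `S` one at a time, `f (S ∪ T) - f S` telescopes into successive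
marginal gains, and by submodularity each of them is at most the gain of the same element at `S`
itself. Monotonicity gives `f T ≤ f (S ∪ T)`, and also makes the largest gain nonnegative, so that
`#T` may be replaced by the budget `k`.
-/

/-- The marginal gain of the element `x` at the set `S` under the set function `f`; it is `0` when
`x` already belongs to `S`. -/
def marginalGain {α G : Type*} [DecidableEq α] [Sub G] (f : Finset α → G) (S : Finset α) (x : α) :
    G :=
  f (insert x S) - f S

/-- Submodularity of a set function, encoded as diminishing returns: the marginal gain of a new
element can only decrease as the set grows. -/
def Submodular {α G : Type*} [DecidableEq α] [Sub G] [LE G] (f : Finset α → G) : Prop :=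
  ∀ ⦃S T : Finset α⦄, S ⊆ T → ∀ x ∉ T, marginalGain f T x ≤ marginalGain f S x

section AddCommGroup

variable {α G : Type*} [DecidableEq α] [AddCommGroup G]

theorem marginalGain_of_mem (f : Finset α → G) {S : Finset α} {x : α} (hx : x ∈ S) :
    marginalGain f S x = 0 := by
  rw [marginalGain, Finset.insert_eq_of_mem hx, sub_self]

section PartialOrder

variable [PartialOrder G]

theorem Submodular.marginalGain_union_le {f : Finset α → G} (hf : Submodular f) (S : Finset α)
    {U : Finset α} {x : α} (hx : x ∉ U) : marginalGain f (S ∪ U) x ≤ marginalGain f S x := by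
  by_cases hxS : x ∈ S
  · rw [marginalGain_of_mem f hxS, marginalGain_of_mem f (Finset.mem_union_left U hxS)]
  · exact hf Finset.subset_union_left x (Finset.notMem_union.mpr ⟨hxS, hx⟩)

variable [IsOrderedAddMonoid G] {f : Finset α → G}

theorem marginalGain_nonneg (hf : Monotone f) (S : Finset α) (x : α) :
    0 ≤ marginalGain f S x :=
  sub_nonneg.mpr (hf (Finset.subset_insert x S))

theorem Submodular.union_sub_le_sum_marginalGain (hf : Submodular f) (S T : Finset α) :
    f (S ∪ T) - f S ≤ ∑ x ∈ T, marginalGain f S x := by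
  induction T using Finset.induction_on with
  | empty => simp
  | insert a U ha ih =>
    calc f (S ∪ insert a U) - f S
        = marginalGain f (S ∪ U) a + (f (S ∪ U) - f S) := by
          rw [Finset.union_insert, marginalGain, sub_add_sub_cancel]
      _ ≤ marginalGain f S a + ∑ x ∈ U, marginalGain f S x :=
          add_le_add (hf.marginalGain_union_le S ha) ih
      _ = ∑ x ∈ insert a U, marginalGain f S x := (Finset.sum_insert ha).symm

theorem Submodular.sub_le_sum_marginalGain (hf : Submodular f) (hmono : Monotone f)
    (S T : Finset α) : f T - f S ≤ ∑ x ∈ T, marginalGain f S x :=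
  (sub_le_sub_right (hmono Finset.subset_union_right) (f S)).trans
    (hf.union_sub_le_sum_marginalGain S T)

end PartialOrder

theorem submodular_gap_bound_general [SemilatticeSup G] [IsOrderedAddMonoid G] {f : Finset α → G}
    (hmono : Monotone f) (hsub : Submodular f) {V : Finset α} (hV : V.Nonempty) {k : ℕ}
    (S : Finset α) {T : Finset α} (hT : T ⊆ V) (hTk : T.card ≤ k) :
    f T - f S ≤ k • V.sup' hV (marginalGain f S) := by
  have gain_le : ∀ x ∈ V, marginalGain f S x ≤ V.sup' hV (marginalGain f S) :=
    fun _ hx => Finset.le_sup' _ hx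
  have max_nonneg : 0 ≤ V.sup' hV (marginalGain f S) :=
    let ⟨x, hx⟩ := hV
    (marginalGain_nonneg hmono S x).trans (gain_le x hx)
  calc f T - f S
      ≤ ∑ x ∈ T, marginalGain f S x := hsub.sub_le_sum_marginalGain hmono S T
    _ ≤ T.card • V.sup' hV (marginalGain f S) :=
        Finset.sum_le_card_nsmul T _ _ fun x hx => gain_le x (hT hx)
    _ ≤ k • V.sup' hV (marginalGain f S) := nsmul_le_nsmul_left max_nonneg hTk

end AddCommGroup

theorem submodular_gap_bound
    {α : Type*} [DecidableEq α] (V : Finset α) (hV : V.Nonempty)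
    (f : Finset α → ℝ)
    (hmono : ∀ S T : Finset α, S ⊆ T → f S ≤ f T)
    (hsub : ∀ S T : Finset α, S ⊆ T → ∀ x ∉ T,
      f (insert x T) - f T ≤ f (insert x S) - f S)
    (k : ℕ) (hk : 1 ≤ k)
    (S T : Finset α) (hS : S ⊆ V) (hT : T ⊆ V) (hTk : T.card ≤ k) :
    f T - f S ≤ (k : ℝ) * V.sup' hV (fun x => f (insert x S) - f S) := by
  rw [← nsmul_eq_mul]
  exact submodular_gap_bound_general hmono hsub hV S hT hTk
end

section
/- Let α be a type with a nonempty finite ground set V (a finset), and let f : Finset α → ℝ be monotone (f(S) ≤ f(T) whenever S ⊆ T), submodular (f(insert x S) − f(S) ≥ f(insert x T) − f(T) whenever S ⊆ T and x ∉ T), and satisfy f(∅) = 0. Let k ≥ 1 and let S_0, S_1, …, S_k be a greedy chain: S_0 = ∅ and for each i, S_{i+1} = insert x_i S_i where x_i ∈ V maximizes x ↦ f(insert x S_i) over V. Then for every T ⊆ V with |T| ≤ k: f(S_k) ≥ (1 − (1 − 1/k)^k) · f(T), and in particular f(S_k) ≥ (1 − 1/e) · f(T). -/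
/-!
Let `S` be the greedy chain and `#T ≤ k`. By submodularity, adjoining `T` to `S i` gains at most the
sum of the gains of its elements, hence at most `k` times the greedy gain; by monotonicity the total
gain covers `f T - f (S i)`. So every greedy step closes at least a `1 / k` fraction of the gap
`f T - f (S i)`, which therefore decays geometrically with ratio `1 - 1 / k ≤ exp (-1 / k)`.
-/

open Finset

section GreedyChain

variable {α β : Type*} [DecidableEq α] [LE β]

/-- A run `S 0, S 1, …` of the greedy algorithm maximizing `f` over the ground set `V`. The
maximizer may already lie in `S i`, in which case the chain stalls; this keeps infinite chains
available over a finite `V`. -/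
structure IsGreedyChain (V : Finset α) (f : Finset α → β) (S : ℕ → Finset α) : Prop where
  zero : S 0 = ∅
  exists_insert (i : ℕ) : ∃ x ∈ V, S (i + 1) = insert x (S i) ∧
    ∀ y ∈ V, f (insert y (S i)) ≤ f (insert x (S i))

namespace IsGreedyChain

variable {V : Finset α} {f : Finset α → β} {S : ℕ → Finset α}

theorem insert_le_succ (hS : IsGreedyChain V f S) (i : ℕ) {y : α} (hy : y ∈ V) :
    f (insert y (S i)) ≤ f (S (i + 1)) := by
  obtain ⟨x, -, hx, hmax⟩ := hS.exists_insert i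
  exact hx ▸ hmax y hy

theorem monotone (hS : IsGreedyChain V f S) : Monotone S :=
  monotone_nat_of_le_succ fun i ↦ by
    obtain ⟨x, -, hx, -⟩ := hS.exists_insert i
    exact hx ▸ subset_insert x (S i)

end IsGreedyChain

end GreedyChain

section OrderedGroup

variable {α G : Type*} [DecidableEq α] [AddCommGroup G] [PartialOrder G]

/-- Submodularity of a set function, encoded as diminishing marginal gains rather than by the
lattice inequality `f (S ∪ T) + f (S ∩ T) ≤ f S + f T`. -/
def IsSubmodular (f : Finset α → G) : Prop :=
  ∀ ⦃S T : Finset α⦄, S ⊆ T → ∀ x ∉ T, f (insert x T) - f T ≤ f (insert x S) - f S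

variable [IsOrderedAddMonoid G] {V : Finset α} {f : Finset α → G} {S : ℕ → Finset α}

theorem IsSubmodular.union_sub_le_sum (hf : IsSubmodular f) (A B : Finset α) :
    f (A ∪ B) - f A ≤ ∑ x ∈ B, (f (insert x A) - f A) := by
  induction B using Finset.induction_on with
  | empty => simp
  | insert b B hb ih =>
    rw [sum_insert hb, union_insert]
    by_cases hbA : b ∈ A
    · simpa [hbA] using ih
    · have hgain : f (insert b (A ∪ B)) - f (A ∪ B) ≤ f (insert b A) - f A :=
        hf subset_union_left b (by simp [hbA, hb])
      simpa using add_le_add hgain ih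

theorem IsGreedyChain.sub_le_card_nsmul (hS : IsGreedyChain V f S) (hmono : Monotone f)
    (hsub : IsSubmodular f) {T : Finset α} (hT : T ⊆ V) (i : ℕ) :
    f T - f (S i) ≤ #T • (f (S (i + 1)) - f (S i)) :=
  calc f T - f (S i) ≤ f (S i ∪ T) - f (S i) := sub_le_sub_right (hmono subset_union_right) _
    _ ≤ ∑ y ∈ T, (f (insert y (S i)) - f (S i)) := hsub.union_sub_le_sum (S i) T
    _ ≤ #T • (f (S (i + 1)) - f (S i)) :=
      sum_le_card_nsmul _ _ _ fun _ hy ↦ sub_le_sub_right (hS.insert_le_succ i (hT hy)) _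

end OrderedGroup

section OrderedField

variable {α K : Type*} [DecidableEq α] [Field K] [LinearOrder K] [IsStrictOrderedRing K]
  {V T : Finset α} {f : Finset α → K} {S : ℕ → Finset α} {k : ℕ}

namespace IsGreedyChain

theorem sub_succ_le_mul (hS : IsGreedyChain V f S) (hmono : Monotone f) (hsub : IsSubmodular f)
    (hT : T ⊆ V) (hk : 1 ≤ k) (hTk : #T ≤ k) (i : ℕ) :
    f T - f (S (i + 1)) ≤ (1 - 1 / (k : K)) * (f T - f (S i)) := by
  have hk_pos : (0 : K) < k := by exact_mod_cast hk
  have hgain_nonneg : 0 ≤ f (S (i + 1)) - f (S i) :=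
    sub_nonneg.2 (hmono (hS.monotone i.le_succ))
  have hgap : f T - f (S i) ≤ k * (f (S (i + 1)) - f (S i)) :=
    calc f T - f (S i) ≤ #T • (f (S (i + 1)) - f (S i)) := hS.sub_le_card_nsmul hmono hsub hT i
      _ ≤ k • (f (S (i + 1)) - f (S i)) := nsmul_le_nsmul_left hgain_nonneg hTk
      _ = k * (f (S (i + 1)) - f (S i)) := nsmul_eq_mul _ _
  have hgain : (f T - f (S i)) / k ≤ f (S (i + 1)) - f (S i) := (div_le_iff₀' hk_pos).2 hgap
  calc f T - f (S (i + 1)) ≤ (f T - f (S i)) - (f T - f (S i)) / k := by linarith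
    _ = (1 - 1 / (k : K)) * (f T - f (S i)) := by ring

theorem sub_le_pow_mul (hS : IsGreedyChain V f S) (hmono : Monotone f) (hsub : IsSubmodular f)
    (hT : T ⊆ V) (hk : 1 ≤ k) (hTk : #T ≤ k) (n : ℕ) :
    f T - f (S n) ≤ (1 - 1 / (k : K)) ^ n * (f T - f ∅) := by
  have hratio : 0 ≤ 1 - 1 / (k : K) := by
    simpa only [one_div, sub_nonneg] using Nat.cast_inv_le_one k
  induction n with
  | zero => simp [hS.zero]
  | succ n ih =>
    calc f T - f (S (n + 1)) ≤ (1 - 1 / (k : K)) * (f T - f (S n)) :=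
          hS.sub_succ_le_mul hmono hsub hT hk hTk n
      _ ≤ (1 - 1 / (k : K)) * ((1 - 1 / (k : K)) ^ n * (f T - f ∅)) := by gcongr
      _ = (1 - 1 / (k : K)) ^ (n + 1) * (f T - f ∅) := by ring

end IsGreedyChain

end OrderedField

theorem one_sub_one_div_pow_le_exp_neg_div (k n : ℕ) :
    (1 - 1 / (k : ℝ)) ^ n ≤ Real.exp (-(n / k)) :=
  calc (1 - 1 / (k : ℝ)) ^ n ≤ Real.exp (-(1 / k)) ^ n :=
        pow_le_pow_left₀ (by simpa using Nat.cast_inv_le_one k) (Real.one_sub_le_exp_neg _) n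
    _ = Real.exp (-(n / k)) := by rw [← Real.exp_nat_mul]; ring_nf

theorem greedy_submodular_approximation_general {α : Type*} [DecidableEq α] {V T : Finset α}
    {f : Finset α → ℝ} {S : ℕ → Finset α} {k : ℕ} (hmono : Monotone f) (hsub : IsSubmodular f)
    (hS : IsGreedyChain V f S) (hk : 1 ≤ k) (hT : T ⊆ V) (hTk : #T ≤ k) (n : ℕ) :
    (1 - (1 - 1 / (k : ℝ)) ^ n) * (f T - f ∅) ≤ f (S n) - f ∅ ∧
      (1 - Real.exp (-(n / k))) * (f T - f ∅) ≤ f (S n) - f ∅ := by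
  have hgap : f T - f (S n) ≤ (1 - 1 / (k : ℝ)) ^ n * (f T - f ∅) :=
    hS.sub_le_pow_mul hmono hsub hT hk hTk n
  have hexp : (1 - 1 / (k : ℝ)) ^ n * (f T - f ∅) ≤ Real.exp (-(n / k)) * (f T - f ∅) :=
    mul_le_mul_of_nonneg_right (one_sub_one_div_pow_le_exp_neg_div k n)
      (sub_nonneg.2 (hmono (empty_subset T)))
  constructor <;> linarith

theorem greedy_submodular_approximation
    {α : Type*} [DecidableEq α] (V : Finset α) (hV : V.Nonempty)
    (f : Finset α → ℝ)
    (hmono : ∀ S T : Finset α, S ⊆ T → f S ≤ f T)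
    (hsub : ∀ S T : Finset α, S ⊆ T → ∀ x ∉ T,
      f (insert x T) - f T ≤ f (insert x S) - f S)
    (hf0 : f ∅ = 0)
    (k : ℕ) (hk : 1 ≤ k)
    (S : ℕ → Finset α) (x : ℕ → α)
    (hS0 : S 0 = ∅)
    (hxV : ∀ i, x i ∈ V)
    (hmax : ∀ i, ∀ y ∈ V, f (insert y (S i)) ≤ f (insert (x i) (S i)))
    (hstep : ∀ i, S (i + 1) = insert (x i) (S i)) :
    ∀ T ⊆ V, T.card ≤ k →
      (1 - (1 - 1 / (k : ℝ)) ^ k) * f T ≤ f (S k) ∧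
      (1 - 1 / Real.exp 1) * f T ≤ f (S k) := by
  intro T hT hTk
  have hk_ne : (k : ℝ) ≠ 0 := Nat.cast_ne_zero.2 (Nat.one_le_iff_ne_zero.1 hk)
  have hS : IsGreedyChain V f S := ⟨hS0, fun i ↦ ⟨x i, hxV i, hstep i, hmax i⟩⟩
  simpa [hf0, hk_ne, Real.exp_neg] using
    greedy_submodular_approximation_general hmono hsub hS hk hT hTk k
end
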